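/- Let v, v*, B, ω ∈ V with v·v = 0, v*·v* = 0, v·v* = 1, B·v = B·v* = 0, ω·v = ω·v* = 0, and ω·ω > 0. Set z := B + i·ω ∈ V ⊗ ℂ and Ω := z − ½(z·z)·v + v* ∈ V ⊗ ℂ. Then Ω·Ω = 0 and Ω·conj(Ω) = 2(ω·ω) > 0. -/

import Mathlib

/- STATEMENT 7: Dolgachev's map a(z) = z − ½z²v + v* sends the tube domain
{B + iω : ω² > 0} into the period domain {Ω : Ω² = 0, Ω·conj(Ω) > 0}, for
{v, v*} a standard hyperbolic basis orthogonal to B and ω.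
We model the complexification V ⊗ ℂ as pairs (re, im) ∈ V × V. -/

noncomputable section

variable {V : Type*}

/-- Inclusion of `V` into its complexification `V × V`. -/
def toC [AddCommGroup V] [Module ℝ V] (v : V) : V × V := (v, 0)

/-- Coordinatewise complex conjugation on the complexification. -/
def conjC [AddCommGroup V] [Module ℝ V] (z : V × V) : V × V := (z.1, -z.2)

/-- Scalar multiplication by a complex number on the complexification. -/
def csmul [AddCommGroup V] [Module ℝ V] (c : ℂ) (z : V × V) : V × V :=
  (c.re • z.1 - c.im • z.2, c.re • z.2 + c.im • z.1)

/-- The ℂ-bilinear extension of a real bilinear form to the complexification. -/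
def Bc [AddCommGroup V] [Module ℝ V] (b : LinearMap.BilinForm ℝ V) (z w : V × V) : ℂ :=
  ⟨b z.1 w.1 - b z.2 w.2, b z.1 w.2 + b z.2 w.1⟩

/-!
Writing `a(z) = z - ½(z·z)v + v*`, the hyperbolic plane contributes exactly the correction that
turns the pairing of two values into `a(z)·a(w) = -½(z - w)·(z - w)`. Since `a` is defined over
`ℝ`, it commutes with conjugation, so `w = z` gives isotropy, and `w = conj z`, for which
`z - w = 2iω`, gives `a(z)·conj(a(z)) = 2(ω·ω)`.
-/

section Complexification

variable [AddCommGroup V] [Module ℝ V]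

theorem conjC_add (z w : V × V) : conjC (z + w) = conjC z + conjC w := by
  simp only [conjC, Prod.fst_add, Prod.snd_add, neg_add, Prod.mk_add_mk]

theorem conjC_sub (z w : V × V) : conjC (z - w) = conjC z - conjC w := by
  simp only [conjC, Prod.fst_sub, Prod.snd_sub, neg_sub', Prod.mk_sub_mk]

theorem conjC_toC (x : V) : conjC (toC x) = toC x := by
  simp only [conjC, toC, neg_zero]

theorem conjC_csmul (c : ℂ) (z : V × V) :
    conjC (csmul c z) = csmul (starRingEnd ℂ c) (conjC z) := by
  ext <;> simp [conjC, csmul, add_comm]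

theorem sub_conjC_self (z : V × V) : z - conjC z = csmul (2 * Complex.I) (toC z.2) := by
  ext <;> simp [conjC, csmul, toC, two_smul]

variable (b : LinearMap.BilinForm ℝ V)

theorem Bc_add_left (z₁ z₂ w : V × V) : Bc b (z₁ + z₂) w = Bc b z₁ w + Bc b z₂ w := by
  apply Complex.ext <;> simp [Bc] <;> ring

theorem Bc_add_right (z w₁ w₂ : V × V) : Bc b z (w₁ + w₂) = Bc b z w₁ + Bc b z w₂ := by
  apply Complex.ext <;> simp [Bc] <;> ring

theorem Bc_sub_left (z₁ z₂ w : V × V) : Bc b (z₁ - z₂) w = Bc b z₁ w - Bc b z₂ w := by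
  apply Complex.ext <;> simp [Bc] <;> ring

theorem Bc_sub_right (z w₁ w₂ : V × V) : Bc b z (w₁ - w₂) = Bc b z w₁ - Bc b z w₂ := by
  apply Complex.ext <;> simp [Bc] <;> ring

theorem Bc_csmul_left (c : ℂ) (z w : V × V) : Bc b (csmul c z) w = c * Bc b z w := by
  apply Complex.ext <;> simp [Bc, csmul] <;> ring

theorem Bc_csmul_right (c : ℂ) (z w : V × V) : Bc b z (csmul c w) = c * Bc b z w := by
  apply Complex.ext <;> simp [Bc, csmul] <;> ring

theorem Bc_toC_toC (x y : V) : Bc b (toC x) (toC y) = (b x y : ℂ) := by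
  apply Complex.ext <;> simp [Bc, toC]

theorem Bc_conjC_conjC (z w : V × V) :
    Bc b (conjC z) (conjC w) = starRingEnd ℂ (Bc b z w) := by
  apply Complex.ext <;> simp [Bc, conjC, add_comm]

variable {b}

theorem Bc_comm (hb : ∀ x y, b x y = b y x) (z w : V × V) : Bc b z w = Bc b w z := by
  simp only [Bc, hb z.1, hb z.2, add_comm]

theorem Bc_conjC_toC_eq_zero {z : V × V} {x : V} (h : Bc b z (toC x) = 0) :
    Bc b (conjC z) (toC x) = 0 := by
  rw [← conjC_toC x, Bc_conjC_conjC, h, map_zero]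

end Complexification

section PeriodPoint

variable [AddCommGroup V] [Module ℝ V]

/-- A standard basis `(v, v*)` of a hyperbolic plane: two isotropic vectors with product `1`.
Only `b v v*` is prescribed; the product in the other order is determined when `b` is symmetric. -/
structure IsHyperbolicPair (b : LinearMap.BilinForm ℝ V) (v vstar : V) : Prop where
  left_self : b v v = 0
  right_self : b vstar vstar = 0
  left_right : b v vstar = 1

/-- Dolgachev's mirror map `a(z) = z - ½(z·z)v + v*`, defined on the whole complexification of `V`
rather than only on the tube domain in the orthogonal complement of `v` and `v*`. -/
def periodPoint (b : LinearMap.BilinForm ℝ V) (v vstar : V) (z : V × V) : V × V :=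
  z - csmul (Bc b z z / 2) (toC v) + toC vstar

theorem conjC_periodPoint (b : LinearMap.BilinForm ℝ V) (v vstar : V) (z : V × V) :
    conjC (periodPoint b v vstar z) = periodPoint b v vstar (conjC z) := by
  simp only [periodPoint, conjC_add, conjC_sub, conjC_csmul, conjC_toC, Bc_conjC_conjC,
    map_div₀, Complex.conj_ofNat]

variable {b : LinearMap.BilinForm ℝ V} {v vstar : V} {z w : V × V}

theorem Bc_sub_csmul_add_of_isHyperbolicPair (hb : ∀ x y, b x y = b y x)
    (h : IsHyperbolicPair b v vstar)
    (hzv : Bc b z (toC v) = 0) (hzvs : Bc b z (toC vstar) = 0)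
    (hwv : Bc b w (toC v) = 0) (hwvs : Bc b w (toC vstar) = 0) (α β : ℂ) :
    Bc b (z - csmul α (toC v) + toC vstar) (w - csmul β (toC v) + toC vstar) =
      Bc b z w - α - β := by
  have hvw : Bc b (toC v) w = 0 := by rw [Bc_comm hb, hwv]
  have hvsw : Bc b (toC vstar) w = 0 := by rw [Bc_comm hb, hwvs]
  have hvsv : b vstar v = 1 := by rw [hb, h.left_right]
  simp only [Bc_add_left, Bc_add_right, Bc_sub_left, Bc_sub_right, Bc_csmul_left,
    Bc_csmul_right, Bc_toC_toC, hzv, hzvs, hvw, hvsw, hvsv, h.left_self, h.right_self,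
    h.left_right, Complex.ofReal_zero, Complex.ofReal_one]
  ring

theorem Bc_periodPoint_periodPoint (hb : ∀ x y, b x y = b y x) (h : IsHyperbolicPair b v vstar)
    (hzv : Bc b z (toC v) = 0) (hzvs : Bc b z (toC vstar) = 0)
    (hwv : Bc b w (toC v) = 0) (hwvs : Bc b w (toC vstar) = 0) :
    Bc b (periodPoint b v vstar z) (periodPoint b v vstar w) = -Bc b (z - w) (z - w) / 2 := by
  calc Bc b (periodPoint b v vstar z) (periodPoint b v vstar w)
      = Bc b z w - Bc b z z / 2 - Bc b w w / 2 :=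
        Bc_sub_csmul_add_of_isHyperbolicPair hb h hzv hzvs hwv hwvs _ _
    _ = -Bc b (z - w) (z - w) / 2 := by
        rw [Bc_sub_left, Bc_sub_right, Bc_sub_right, Bc_comm hb w z]
        ring

theorem Bc_periodPoint_self (hb : ∀ x y, b x y = b y x) (h : IsHyperbolicPair b v vstar)
    (hzv : Bc b z (toC v) = 0) (hzvs : Bc b z (toC vstar) = 0) :
    Bc b (periodPoint b v vstar z) (periodPoint b v vstar z) = 0 := by
  rw [Bc_periodPoint_periodPoint hb h hzv hzvs hzv hzvs, Bc_sub_left, sub_self, neg_zero, zero_div]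

theorem Bc_periodPoint_conjC_periodPoint (hb : ∀ x y, b x y = b y x)
    (h : IsHyperbolicPair b v vstar)
    (hzv : Bc b z (toC v) = 0) (hzvs : Bc b z (toC vstar) = 0) :
    Bc b (periodPoint b v vstar z) (conjC (periodPoint b v vstar z)) =
      ((2 * b z.2 z.2 : ℝ) : ℂ) := by
  rw [conjC_periodPoint, Bc_periodPoint_periodPoint hb h hzv hzvs (Bc_conjC_toC_eq_zero hzv)
    (Bc_conjC_toC_eq_zero hzvs), sub_conjC_self, Bc_csmul_left, Bc_csmul_right, Bc_toC_toC]
  push_cast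
  linear_combination (-2 * (b z.2 z.2 : ℂ)) * Complex.I_sq

end PeriodPoint

theorem tube_domain_to_period_domain
    [AddCommGroup V] [Module ℝ V]
    (b : LinearMap.BilinForm ℝ V) (hsymm : ∀ x y : V, b x y = b y x)
    (v vstar Bf ω : V)
    (hvv : b v v = 0) (hvsvs : b vstar vstar = 0) (hvvs : b v vstar = 1)
    (hBv : b Bf v = 0) (hBvs : b Bf vstar = 0)
    (hωv : b ω v = 0) (hωvs : b ω vstar = 0)
    (hω : 0 < b ω ω)
    (z : V × V) (hz : z = toC Bf + csmul Complex.I (toC ω))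
    (Ω : V × V) (hΩ : Ω = z - csmul (Bc b z z / 2) (toC v) + toC vstar) :
    Bc b Ω Ω = 0 ∧
    Bc b Ω (conjC Ω) = ((2 * b ω ω : ℝ) : ℂ) ∧
    0 < 2 * b ω ω := by
  have hpair : IsHyperbolicPair b v vstar := ⟨hvv, hvsvs, hvvs⟩
  have hzx {x : V} (hB : b Bf x = 0) (hωx : b ω x = 0) : Bc b z (toC x) = 0 := by
    simp only [hz, Bc_add_left, Bc_csmul_left, Bc_toC_toC, hB, hωx, Complex.ofReal_zero, mul_zero,
      add_zero]
  have him : z.2 = ω := by simp [hz, toC, csmul]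
  have hΩz : Ω = periodPoint b v vstar z := hΩ
  rw [hΩz, Bc_periodPoint_conjC_periodPoint hsymm hpair (hzx hBv hωv) (hzx hBvs hωvs), him]
  exact ⟨Bc_periodPoint_self hsymm hpair (hzx hBv hωv) (hzx hBvs hωvs), rfl,
    mul_pos two_pos hω⟩

end
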